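/- arXiv:1208.2084 — 6 statements merged into one kernel-verified Lean document; each statement's English description precedes it below -/
import Mathlib

section
/- Let G be a group, P and P' subgroups of G, Q a subgroup of P', and w ∈ G. Then the map sending the double coset (w⁻¹Pw ∩ P') a Q to the double coset P(wa)Q, for a ∈ P', is a well-defined bijection from the double coset space (w⁻¹Pw ∩ P')\P'/Q onto the set of (P,Q)-double cosets contained in PwP', i.e. onto P\PwP'/Q. -/
open Pointwise

/-!
The map is `D ↦ P w D`, since `P w (w⁻¹Pw ∩ P') = P w`. Its inverse is `E ↦ w⁻¹E ∩ P'`: every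
`(P, Q)`-double coset in `P w P'` is `P (w a) Q` for some `a ∈ P'`, its left translate by `w⁻¹` is
`(w⁻¹Pw) a Q`, and the modular law `S a Q ∩ P' = (S ∩ P') a Q`, valid for `a ∈ P'` and `Q ⊆ P'`,
cuts this down to `(w⁻¹Pw ∩ P') a Q`.
-/

open DoubleCoset

section

variable {G : Type*} [Group G]

/-- The double coset space `A \ S / B`, encoded as the set of subsets `A x B` of `G` with `x ∈ S`
rather than as a quotient type. -/
def doubleCosetSpace (A S B : Set G) : Set (Set G) :=
  {d | ∃ x ∈ S, d = doubleCoset x A B}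

theorem doubleCoset_inter_subgroup (S : Set G) {T : Set G} {K : Subgroup G} (hT : T ⊆ K) {a : G}
    (ha : a ∈ K) : doubleCoset a S T ∩ K = doubleCoset a (S ∩ K) T := by
  ext x
  simp only [Set.mem_inter_iff, mem_doubleCoset, SetLike.mem_coe]
  constructor
  · rintro ⟨⟨s, hs, t, ht, rfl⟩, hx⟩
    have hsK : s ∈ K := by
      rwa [K.mul_mem_cancel_right (hT ht), K.mul_mem_cancel_right ha] at hx
    exact ⟨s, ⟨hs, hsK⟩, t, ht, rfl⟩
  · rintro ⟨s, ⟨hs, hsK⟩, t, ht, rfl⟩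
    exact ⟨⟨s, hs, t, ht, rfl⟩, K.mul_mem (K.mul_mem hsK ha) (hT ht)⟩

theorem inv_smul_doubleCoset_mul (S T : Set G) (w a : G) :
    w⁻¹ • doubleCoset (w * a) S T = doubleCoset a {x | w * x * w⁻¹ ∈ S} T := by
  ext x
  simp only [Set.mem_inv_smul_set_iff, smul_eq_mul, mem_doubleCoset, Set.mem_ofPred_eq]
  constructor
  · rintro ⟨s, hs, t, ht, hx⟩
    refine ⟨w⁻¹ * s * w, by simpa [mul_assoc] using hs, t, ht, mul_left_cancel (a := w) ?_⟩
    rw [hx]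
    group
  · rintro ⟨y, hy, t, ht, rfl⟩
    exact ⟨w * y * w⁻¹, hy, t, ht, by group⟩

theorem inv_smul_doubleCoset_mul_inter_subgroup (S : Set G) {T : Set G} {K : Subgroup G}
    (hT : T ⊆ K) (w : G) {a : G} (ha : a ∈ K) :
    w⁻¹ • doubleCoset (w * a) S T ∩ K = doubleCoset a ({x | w * x * w⁻¹ ∈ S} ∩ K) T := by
  rw [inv_smul_doubleCoset_mul, doubleCoset_inter_subgroup _ hT ha]

theorem subgroup_mul_singleton_mul_eq (P : Subgroup G) {S : Set G} {w : G} (h_one : 1 ∈ S)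
    (hS : S ⊆ {x | w * x * w⁻¹ ∈ P}) : (P : Set G) * {w} * S = P * {w} := by
  refine Set.Subset.antisymm ?_ (Set.subset_mul_left _ h_one)
  rw [Set.mul_singleton]
  rintro _ ⟨_, ⟨p, hp, rfl⟩, x, hx, rfl⟩
  exact ⟨p * (w * x * w⁻¹), P.mul_mem hp (hS hx), by group⟩

theorem subgroup_mul_singleton_mul_doubleCoset (P K : Subgroup G) (T : Set G) (w a : G) :
    (P : Set G) * {w} * doubleCoset a ({x | w * x * w⁻¹ ∈ P} ∩ K) T =
      doubleCoset (w * a) P T := by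
  have h_absorb : (P : Set G) * {w} * ({x | w * x * w⁻¹ ∈ P} ∩ K) = P * {w} :=
    subgroup_mul_singleton_mul_eq P (by simp [one_mem]) Set.inter_subset_left
  rw [doubleCoset, doubleCoset, ← mul_assoc, ← mul_assoc, h_absorb, mul_assoc (P : Set G),
    Set.singleton_mul_singleton]

theorem mem_doubleCosetSpace_doubleCoset (P : Subgroup G) (S T : Set G) (w : G) {E : Set G} :
    E ∈ doubleCosetSpace P (doubleCoset w P S) T ↔ ∃ a ∈ S, E = doubleCoset (w * a) P T := by
  constructor
  · rintro ⟨x, hx, rfl⟩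
    obtain ⟨p, hp, a, ha, rfl⟩ := mem_doubleCoset.1 hx
    refine ⟨a, ha, ?_⟩
    rw [doubleCoset, doubleCoset, mul_assoc p, ← Set.singleton_mul_singleton, ← mul_assoc,
      Subgroup.subgroup_mul_singleton hp]
  · rintro ⟨a, ha, rfl⟩
    exact ⟨w * a, mem_doubleCoset.2 ⟨1, P.one_mem, a, ha, by rw [one_mul]⟩, rfl⟩

/-- The bijection `(w⁻¹Pw ∩ P') \ P' / Q ≃ P \ PwP' / Q`, given by `D ↦ P w D` with inverse
`E ↦ w⁻¹E ∩ P'`, so that neither direction chooses representatives. -/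
def doubleCosetTranslateEquiv (P P' : Subgroup G) {Q : Set G} (hQ : Q ⊆ P') (w : G) :
    doubleCosetSpace ({x | w * x * w⁻¹ ∈ P} ∩ P') P' Q ≃
      doubleCosetSpace P (doubleCoset w P P') Q where
  toFun D := ⟨P * {w} * D, by
    obtain ⟨a, ha, hD⟩ := D.2
    rw [mem_doubleCosetSpace_doubleCoset]
    exact ⟨a, ha, by rw [hD, subgroup_mul_singleton_mul_doubleCoset]⟩⟩
  invFun E := ⟨w⁻¹ • (E : Set G) ∩ P', by
    obtain ⟨a, ha, hE⟩ := (mem_doubleCosetSpace_doubleCoset P P' Q w).1 E.2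
    exact ⟨a, ha, by rw [hE, inv_smul_doubleCoset_mul_inter_subgroup _ hQ w ha]; rfl⟩⟩
  left_inv D := by
    obtain ⟨a, ha, hD⟩ := D.2
    apply Subtype.ext
    simp only [hD]
    rw [subgroup_mul_singleton_mul_doubleCoset]
    exact inv_smul_doubleCoset_mul_inter_subgroup _ hQ w ha
  right_inv E := by
    obtain ⟨a, ha, hE⟩ := (mem_doubleCosetSpace_doubleCoset P P' Q w).1 E.2
    apply Subtype.ext
    simp only [hE]
    rw [inv_smul_doubleCoset_mul_inter_subgroup _ hQ w ha]
    exact subgroup_mul_singleton_mul_doubleCoset P P' Q w a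

theorem double_coset_translate_equiv_general (P P' : Subgroup G) {Q : Set G} (hQ : Q ⊆ P')
    (w : G) :
    ∃ e : doubleCosetSpace ({x | w * x * w⁻¹ ∈ P} ∩ P') P' Q ≃
        doubleCosetSpace P (doubleCoset w P P') Q,
      ∀ a (ha : a ∈ P'),
        (e ⟨doubleCoset a ({x | w * x * w⁻¹ ∈ P} ∩ P') Q, a, ha, rfl⟩ : Set G) =
          doubleCoset (w * a) P Q :=
  ⟨doubleCosetTranslateEquiv P P' hQ w,
    fun a _ ↦ subgroup_mul_singleton_mul_doubleCoset P P' Q w a⟩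

end

/-- Let `G` be a group, `P, P'` subgroups of `G`, `Q` a subgroup of `P'`,
and `w ∈ G`.  The map sending the double coset `(w⁻¹Pw ∩ P') a Q` to `P (wa) Q` (for
`a ∈ P'`), where `w⁻¹Pw = {x | w x w⁻¹ ∈ P}`, is a well-defined bijection from the
double coset space `(w⁻¹Pw ∩ P')\P'/Q` onto the set of `(P,Q)`-double cosets contained
in `P w P'`. -/
theorem double_coset_translate_equiv {G : Type*} [Group G]
    (P P' Q : Subgroup G) (hQ : Q ≤ P') (w : G) :
    ∃ e : {d : Set G | ∃ a ∈ P', d = ({x : G | w * x * w⁻¹ ∈ P} ∩ ↑P') * {a} * ↑Q} ≃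
          {d : Set G | ∃ x ∈ ((↑P : Set G) * {w} * ↑P'), d = (↑P : Set G) * {x} * ↑Q},
      ∀ a (ha : a ∈ P'),
        (e ⟨({x : G | w * x * w⁻¹ ∈ P} ∩ ↑P') * {a} * ↑Q, ⟨a, ha, rfl⟩⟩ : Set G)
          = (↑P : Set G) * {w * a} * ↑Q := by
  exact double_coset_translate_equiv_general P P' hQ w
end

section
/- Let G be a group that is the internal semidirect product of a subgroup L₁ and a normal subgroup U₁ (so U₁ is normal in G, L₁ ∩ U₁ = {1}, and L₁U₁ = G). Let L₂ and L₃ be subgroups of L₁ and let U₂ be a subgroup of U₁ such that L₂ normalizes U₂ (so L₂U₂ is a subgroup of G). Then the map sending the double coset L₂ l L₃ to the double coset (L₂U₂) l (L₃U₁), for l ∈ L₁, is a well-defined bijection from L₂\L₁/L₃ onto (L₂U₂)\G/(L₃U₁). -/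
open Pointwise

/-!
Let `L` be a complement of the normal subgroup `U`. Since `U` is normal, any set `X * U` absorbs
multiplication on its left by a nonempty `V ⊆ U`. This removes `V` from `(S * V) x (T * U)`, leaving
`(S x T) * U`, and lets the `U`-component of `x = l u` be dropped. So every double coset in `G` has
the form `D * U` with `D = S l T ⊆ L`, and `D` is recovered from `D * U` by intersecting with `L`,
because `L` meets `U` trivially.
-/

section

open DoubleCoset

variable {G : Type*} [Group G] {L U : Subgroup G} {D S T V X : Set G}

lemma mul_coe_of_subset (hV : V.Nonempty) (hVU : V ⊆ U) : V * (U : Set G) = U := by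
  obtain ⟨v, hv⟩ := hV
  refine Set.Subset.antisymm ((Set.mul_subset_mul_right hVU).trans_eq (coe_mul_coe U)) ?_
  calc (U : Set G) = {v} * U := (Subgroup.singleton_mul_subgroup (hVU hv)).symm
    _ ⊆ V * U := Set.mul_subset_mul_right (Set.singleton_subset_iff.2 hv)

lemma mul_mul_coe_of_subset_normal [U.Normal] (hV : V.Nonempty) (hVU : V ⊆ U) :
    V * (X * (U : Set G)) = X * (U : Set G) := by
  rw [Subgroup.set_mul_normal_comm, ← mul_assoc, mul_coe_of_subset hV hVU]

lemma doubleCoset_mul_mul_normal [U.Normal] (hV : V.Nonempty) (hVU : V ⊆ U) (x : G) :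
    doubleCoset x (S * V) (T * U) = doubleCoset x S T * U := by
  calc S * V * {x} * (T * (U : Set G))
      = S * (V * ({x} * T * (U : Set G))) := by simp only [mul_assoc]
    _ = S * ({x} * T * (U : Set G)) := by rw [mul_mul_coe_of_subset_normal hV hVU]
    _ = S * {x} * T * (U : Set G) := by simp only [mul_assoc]

lemma doubleCoset_mul_right_mul_normal [U.Normal] {u : G} (hu : u ∈ U) (x : G) :
    doubleCoset (x * u) S T * (U : Set G) = doubleCoset x S T * U := by
  calc S * {x * u} * T * (U : Set G)
      = S * {x} * ({u} * (T * (U : Set G))) := by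
        simp only [← Set.singleton_mul_singleton, mul_assoc]
    _ = S * {x} * (T * (U : Set G)) := by
        rw [mul_mul_coe_of_subset_normal (Set.singleton_nonempty u) (Set.singleton_subset_iff.2 hu)]
    _ = S * {x} * T * (U : Set G) := (mul_assoc _ _ _).symm

lemma doubleCoset_subset_coe (hS : S ⊆ L) (hT : T ⊆ L) {l : G} (hl : l ∈ L) :
    doubleCoset l S T ⊆ L := by
  intro g hg
  obtain ⟨s, hs, t, ht, rfl⟩ := mem_doubleCoset.1 hg
  exact L.mul_mem (L.mul_mem (hS hs) hl) (hT ht)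

lemma mul_inter_coe_of_disjoint (hLU : Disjoint L U) (hD : D ⊆ L) :
    D * (U : Set G) ∩ L = D := by
  refine Set.Subset.antisymm ?_ (Set.subset_inter (Set.subset_mul_left D U.one_mem) hD)
  rintro _ ⟨⟨d, hd, u, hu, rfl⟩, hdu⟩
  have huL : u ∈ L := (L.mul_mem_cancel_left (hD hd)).1 hdu
  obtain rfl : u = 1 := Subgroup.disjoint_def.1 hLU huL hu
  simpa only [mul_one] using hd

lemma injOn_mul_coe_of_disjoint (hLU : Disjoint L U) :
    Set.InjOn (· * (U : Set G)) (𝒫 (L : Set G)) :=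
  Set.LeftInvOn.injOn (f₁' := (· ∩ (L : Set G))) fun _ hD => mul_inter_coe_of_disjoint hLU hD

lemma bijOn_mul_coe_doubleCoset [U.Normal] (hLU : L.IsComplement' U)
    (hS : S ⊆ L) (hT : T ⊆ L) (hV : V.Nonempty) (hVU : V ⊆ U) :
    Set.BijOn (· * (U : Set G)) {d | ∃ l ∈ L, d = doubleCoset l S T}
      {d | ∃ x, d = doubleCoset x (S * V) (T * U)} := by
  refine ⟨?mapsTo, (injOn_mul_coe_of_disjoint hLU.disjoint).mono ?subsets, ?surjOn⟩
  case mapsTo =>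
    rintro _ ⟨l, -, rfl⟩
    exact ⟨l, (doubleCoset_mul_mul_normal hV hVU l).symm⟩
  case subsets =>
    rintro _ ⟨l, hl, rfl⟩
    exact doubleCoset_subset_coe hS hT hl
  case surjOn =>
    rintro _ ⟨x, rfl⟩
    obtain ⟨l, hl, u, hu, rfl⟩ : x ∈ (L : Set G) * U := hLU.mul_eq ▸ Set.mem_univ x
    exact ⟨doubleCoset l S T, ⟨l, hl, rfl⟩,
      ((doubleCoset_mul_mul_normal hV hVU _).trans (doubleCoset_mul_right_mul_normal hu l)).symm⟩

theorem double_coset_semidirect_equiv'_general [U.Normal] (hLU : L.IsComplement' U)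
    (hS : S ⊆ L) (hT : T ⊆ L) (hV : V.Nonempty) (hVU : V ⊆ U) :
    ∃ e : {d : Set G | ∃ l ∈ L, d = doubleCoset l S T} ≃
          {d : Set G | ∃ x, d = doubleCoset x (S * V) (T * U)},
      ∀ l (hl : l ∈ L),
        (e ⟨doubleCoset l S T, ⟨l, hl, rfl⟩⟩ : Set G) = doubleCoset l (S * V) (T * U) :=
  ⟨(bijOn_mul_coe_doubleCoset hLU hS hT hV hVU).equiv _,
    fun l _ => (doubleCoset_mul_mul_normal hV hVU l).symm⟩

end

/-- Let `G` be the internal semidirect product of a subgroup `L₁` and a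
normal subgroup `U₁`.  Let `L₂, L₃` be subgroups of `L₁` and `U₂ ≤ U₁` a subgroup
normalized by `L₂`.  Then the map sending the double coset `L₂ l L₃` to
`(L₂U₂) l (L₃U₁)` (for `l ∈ L₁`) is a well-defined bijection from `L₂\L₁/L₃` onto
`(L₂U₂)\G/(L₃U₁)`. -/
theorem double_coset_semidirect_equiv' {G : Type*} [Group G]
    (L₁ U₁ L₂ L₃ U₂ : Subgroup G)
    (hN : U₁.Normal) (hInt : L₁ ⊓ U₁ = ⊥)
    (hGen : (↑L₁ : Set G) * (↑U₁ : Set G) = Set.univ)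
    (h₂ : L₂ ≤ L₁) (h₃ : L₃ ≤ L₁) (hU₂ : U₂ ≤ U₁)
    (hNorm : ∀ l ∈ L₂, ∀ u ∈ U₂, l * u * l⁻¹ ∈ U₂) :
    ∃ e : {d : Set G | ∃ l ∈ L₁, d = (↑L₂ : Set G) * {l} * ↑L₃} ≃
          {d : Set G | ∃ x : G,
            d = ((↑L₂ : Set G) * (↑U₂ : Set G)) * {x} * ((↑L₃ : Set G) * (↑U₁ : Set G))},
      ∀ l (hl : l ∈ L₁),
        (e ⟨(↑L₂ : Set G) * {l} * ↑L₃, ⟨l, hl, rfl⟩⟩ : Set G)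
          = ((↑L₂ : Set G) * (↑U₂ : Set G)) * {l} * ((↑L₃ : Set G) * (↑U₁ : Set G)) :=
  double_coset_semidirect_equiv'_general
    (Subgroup.isComplement'_of_disjoint_and_mul_eq_univ (disjoint_iff.2 hInt) hGen)
    h₂ h₃ ⟨1, U₂.one_mem⟩ hU₂
end

section
/- Let G be a group that is the internal semidirect product of a subgroup L₁ and a normal subgroup U₁ (so U₁ is normal in G, L₁ ∩ U₁ = {1}, and L₁U₁ = G). Let L₂, L₃ be subgroups of L₁ and U₂, U₃ subgroups of U₁ such that L₂ normalizes U₂ and L₃ normalizes U₃ (so L₂U₂ and L₃U₃ are subgroups of G). Then the map sending the double coset U₂ u U₃ to the double coset (L₂U₂) u (L₃U₃), for u ∈ U₁, descends to the quotient of U₂\U₁/U₃ by the conjugation action of L₂ ∩ L₃ (given by l · (U₂ u U₃) = U₂ (l u l⁻¹) U₃) and induces a bijection from (U₂\U₁/U₃)/(L₂ ∩ L₃) onto the set of (L₂U₂, L₃U₃)-double cosets contained in L₂U₁L₃. -/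
open Pointwise

/-!
Since `L₃U₃ = U₃L₃`, the double coset `(L₂U₂) u (L₃U₃)` is the saturation `L₂ d L₃` of
`d = U₂ u U₃`, so everything is about the map `d ↦ L₂ d L₃`. Conjugating `d` by `l ∈ L₂ ∩ L₃` does
not change `L₂ d L₃`. Conversely, if `v ∈ L₂ d L₃`, say `v = l w m` with `w ∈ d`, then
`l m = (l w l⁻¹)⁻¹ v` lies in `L₂L₃ ∩ U₁ = {1}`; hence `m = l⁻¹`, so `l ∈ L₂ ∩ L₃` and
`v ∈ l d l⁻¹`.
-/

section DoubleCosets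

open DoubleCoset (doubleCoset mem_doubleCoset mem_doubleCoset_self doubleCoset_eq_of_mem)
open Subgroup (normalizer)

/-- The set `A\S/B` of double cosets `A x B` with `x ∈ S`, each encoded as a subset of `G`. -/
def doubleCosets {G : Type*} [Mul G] (S A B : Set G) : Set (Set G) :=
  {d | ∃ x ∈ S, d = doubleCoset x A B}

theorem mul_doubleCoset_mul {G : Type*} [Semigroup G] (x : G) (A B S T : Set G) :
    A * doubleCoset x S T * B = doubleCoset x (A * S) (T * B) := by
  simp only [doubleCoset, mul_assoc]

theorem smul_doubleCoset {α G : Type*} [Monoid α] [Monoid G] [MulDistribMulAction α G]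
    (a : α) (x : G) (S T : Set G) :
    a • doubleCoset x S T = doubleCoset (a • x) (a • S) (a • T) := by
  simp only [doubleCoset, smul_mul', Set.smul_set_singleton]

variable {G : Type*} [Group G]

theorem doubleCosets_mul_mul_of_le {H K L M : Subgroup G} (hL : L ≤ H) (hM : M ≤ K) (S : Set G) :
    doubleCosets (L * S * M : Set G) H K = doubleCosets S H K := by
  ext d
  constructor
  · rintro ⟨_, ⟨_, ⟨l, hl, x, hx, rfl⟩, m, hm, rfl⟩, rfl⟩
    exact ⟨x, hx, doubleCoset_eq_of_mem (mem_doubleCoset.2 ⟨l, hL hl, m, hM hm, rfl⟩)⟩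
  · rintro ⟨x, hx, rfl⟩
    exact ⟨x, ⟨x, ⟨1, one_mem L, x, hx, one_mul x⟩, 1, one_mem M, mul_one x⟩, rfl⟩

theorem mul_conj_smul_mul {L M : Subgroup G} {l : G} (hl : l ∈ L ⊓ M) (S : Set G) :
    (L : Set G) * (MulAut.conj l • S) * M = L * S * M := by
  have conj_smul_eq : MulAut.conj l • S = {l} * S * {l⁻¹} := by
    simp only [Set.singleton_mul, Set.mul_singleton, Set.image_image]
    rfl
  calc (L : Set G) * (MulAut.conj l • S) * M
      = L * {l} * S * ({l⁻¹} * M) := by simp only [conj_smul_eq, mul_assoc]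
    _ = L * S * M := by
      rw [Subgroup.subgroup_mul_singleton hl.1, Subgroup.singleton_mul_subgroup (inv_mem hl.2)]

theorem conj_smul_doubleCoset {H K : Subgroup G} {g : G} (hH : g ∈ normalizer (H : Set G))
    (hK : g ∈ normalizer (K : Set G)) (x : G) :
    MulAut.conj g • doubleCoset x H K = doubleCoset (g * x * g⁻¹) H K := by
  have smul_H : MulAut.conj g • (H : Set G) = H := Subgroup.mem_normalizer_iff_conj_image_eq.1 hH
  have smul_K : MulAut.conj g • (K : Set G) = K := Subgroup.mem_normalizer_iff_conj_image_eq.1 hK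
  rw [smul_doubleCoset, smul_H, smul_K, MulAut.smul_def, MulAut.conj_apply]

theorem mul_mem_of_mul_mul_mem {U : Subgroup G} {l w m : G} (hl : l ∈ normalizer (U : Set G))
    (hw : w ∈ U) (h : l * w * m ∈ U) : l * m ∈ U := by
  have conj_mem : l * w * l⁻¹ ∈ U := (Subgroup.mem_normalizer_iff.1 hl w).1 hw
  have factor : l * m = (l * w * l⁻¹)⁻¹ * (l * w * m) := by group
  exact factor ▸ mul_mem (inv_mem conj_mem) h

theorem doubleCoset_subset {U : Subgroup G} {S T : Set G} (hS : S ⊆ U) (hT : T ⊆ U) {u : G}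
    (hu : u ∈ U) : doubleCoset u S T ⊆ U :=
  Subgroup.mul_subset (Subgroup.mul_subset hS (Set.singleton_subset_iff.2 hu)) hT

variable {U₁ L₂ L₃ U₂ U₃ : Subgroup G}

theorem mul_doubleCoset_mul_of_le_normalizer (hN₃ : L₃ ≤ normalizer (U₃ : Set G)) (u : G)
    (A S : Set G) : A * doubleCoset u S U₃ * L₃ = doubleCoset u (A * S) (L₃ * U₃) := by
  rw [mul_doubleCoset_mul, Subgroup.set_mul_normalizer_comm _ _ hN₃]

theorem exists_mem_conj_smul_of_mem_mul_mul (hN₁ : L₂ ≤ normalizer (U₁ : Set G))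
    (hInt : ∀ l ∈ L₂, ∀ m ∈ L₃, l * m ∈ U₁ → l * m = 1) {d : Set G} (hd : d ⊆ U₁) {u : G}
    (hu : u ∈ U₁) (h : u ∈ (L₂ : Set G) * d * L₃) :
    ∃ l ∈ L₂ ⊓ L₃, u ∈ MulAut.conj l • d := by
  obtain ⟨_, ⟨l, hl, w, hw, rfl⟩, m, hm, rfl⟩ := h
  have mul_eq_one : l * m = 1 := hInt l hl m hm (mul_mem_of_mul_mul_mem (hN₁ hl) (hd hw) hu)
  obtain rfl : m = l⁻¹ := eq_inv_of_mul_eq_one_right mul_eq_one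
  exact ⟨l, ⟨hl, L₃.inv_mem_iff.1 hm⟩, w, hw, rfl⟩

theorem mul_doubleCoset_mul_eq_iff (hN₁ : L₂ ≤ normalizer (U₁ : Set G))
    (hInt : ∀ l ∈ L₂, ∀ m ∈ L₃, l * m ∈ U₁ → l * m = 1) (hU₂ : U₂ ≤ U₁) (hU₃ : U₃ ≤ U₁)
    (hN₂ : L₂ ≤ normalizer (U₂ : Set G)) (hN₃ : L₃ ≤ normalizer (U₃ : Set G))
    {u u' : G} (hu : u ∈ U₁) (hu' : u' ∈ U₁) :
    (L₂ : Set G) * doubleCoset u U₂ U₃ * L₃ = L₂ * doubleCoset u' U₂ U₃ * L₃ ↔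
      ∃ l ∈ L₂ ⊓ L₃, doubleCoset u' (U₂ : Set G) U₃ =
        MulAut.conj l • doubleCoset u (U₂ : Set G) U₃ := by
  constructor
  · intro h
    have mem : u' ∈ (L₂ : Set G) * doubleCoset u U₂ U₃ * L₃ :=
      h ▸ ⟨u', ⟨1, one_mem L₂, u', mem_doubleCoset_self U₂ U₃ u', one_mul u'⟩,
        1, one_mem L₃, mul_one u'⟩
    obtain ⟨l, hl, hmem⟩ :=
      exists_mem_conj_smul_of_mem_mul_mul hN₁ hInt (doubleCoset_subset hU₂ hU₃ hu) hu' mem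
    refine ⟨l, hl, ?_⟩
    rw [conj_smul_doubleCoset (hN₂ hl.1) (hN₃ hl.2)] at hmem ⊢
    exact doubleCoset_eq_of_mem hmem
  · rintro ⟨l, hl, h⟩
    rw [h, mul_conj_smul_mul hl]

theorem doubleCosets_mul_mul_of_le_normalizer (hN₂ : L₂ ≤ normalizer (U₂ : Set G))
    (hN₃ : L₃ ≤ normalizer (U₃ : Set G)) (S : Set G) :
    doubleCosets (L₂ * S * L₃ : Set G) (L₂ * U₂ : Set G) (L₃ * U₃ : Set G) =
      doubleCosets S (L₂ * U₂ : Set G) (L₃ * U₃ : Set G) := by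
  rw [← Subgroup.coe_mul_of_left_le_normalizer_right L₂ U₂ hN₂,
    ← Subgroup.coe_mul_of_left_le_normalizer_right L₃ U₃ hN₃,
    doubleCosets_mul_mul_of_le le_sup_left le_sup_left]

theorem image_mul_mul_doubleCosets (hN₂ : L₂ ≤ normalizer (U₂ : Set G))
    (hN₃ : L₃ ≤ normalizer (U₃ : Set G)) (S : Set G) :
    (fun d : Set G => (L₂ : Set G) * d * L₃) '' doubleCosets S U₂ U₃ =
      doubleCosets (L₂ * S * L₃ : Set G) (L₂ * U₂ : Set G) (L₃ * U₃ : Set G) := by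
  rw [doubleCosets_mul_mul_of_le_normalizer hN₂ hN₃]
  ext d
  constructor
  · rintro ⟨_, ⟨u, hu, rfl⟩, rfl⟩
    exact ⟨u, hu, mul_doubleCoset_mul_of_le_normalizer hN₃ u _ _⟩
  · rintro ⟨u, hu, rfl⟩
    exact ⟨_, ⟨u, hu, rfl⟩, mul_doubleCoset_mul_of_le_normalizer hN₃ u _ _⟩

theorem double_coset_quotient_by_conjugation_equiv_general
    (hN₁ : L₂ ≤ normalizer (U₁ : Set G))
    (hInt : ∀ l ∈ L₂, ∀ m ∈ L₃, l * m ∈ U₁ → l * m = 1) (hU₂ : U₂ ≤ U₁) (hU₃ : U₃ ≤ U₁)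
    (hN₂ : L₂ ≤ normalizer (U₂ : Set G)) (hN₃ : L₃ ≤ normalizer (U₃ : Set G)) :
    ∃ e : Quot (fun d d' : doubleCosets (U₁ : Set G) U₂ U₃ =>
            ∃ l ∈ L₂ ⊓ L₃, (d' : Set G) = MulAut.conj l • (d : Set G)) ≃
          doubleCosets (L₂ * U₁ * L₃ : Set G) (L₂ * U₂ : Set G) (L₃ * U₃ : Set G),
      ∀ u (hu : u ∈ U₁), (e (Quot.mk _ ⟨doubleCoset u U₂ U₃, u, hu, rfl⟩) : Set G) =
        doubleCoset u (L₂ * U₂) (L₃ * U₃) := by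
  have image_eq := image_mul_mul_doubleCosets hN₂ hN₃ (U₁ : Set G)
  let saturate : doubleCosets (U₁ : Set G) U₂ U₃ →
      doubleCosets (L₂ * U₁ * L₃ : Set G) (L₂ * U₂ : Set G) (L₃ * U₃ : Set G) :=
    (Set.mapsTo_iff_image_subset.2 image_eq.subset).restrict
  have saturate_surjective : Function.Surjective saturate :=
    (Set.MapsTo.restrict_surjective_iff _).2 image_eq.superset
  have rel_iff_ker : ∀ d d' : doubleCosets (U₁ : Set G) U₂ U₃,
      (∃ l ∈ L₂ ⊓ L₃, (d' : Set G) = MulAut.conj l • (d : Set G)) ↔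
        Setoid.ker saturate d d' := by
    rintro ⟨_, u, hu, rfl⟩ ⟨_, u', hu', rfl⟩
    rw [Setoid.ker_def, Subtype.ext_iff]
    exact (mul_doubleCoset_mul_eq_iff hN₁ hInt hU₂ hU₃ hN₂ hN₃ hu hu').symm
  exact ⟨(Quot.congrRight rel_iff_ker).trans
      (Setoid.quotientKerEquivOfSurjective saturate saturate_surjective),
    fun u _ => mul_doubleCoset_mul_of_le_normalizer hN₃ u _ _⟩

end DoubleCosets

/-- Let `G` be the internal semidirect product of a subgroup `L₁` and a
normal subgroup `U₁`.  Let `L₂, L₃ ≤ L₁` and `U₂, U₃ ≤ U₁` be subgroups with `L₂`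
normalizing `U₂` and `L₃` normalizing `U₃`.  Then the map sending the double coset
`U₂ u U₃` to `(L₂U₂) u (L₃U₃)` (for `u ∈ U₁`) descends to the quotient of `U₂\U₁/U₃`
by the conjugation action of `L₂ ∩ L₃` and induces a bijection from
`(U₂\U₁/U₃)/(L₂ ∩ L₃)` onto the set of `(L₂U₂, L₃U₃)`-double cosets contained in
`L₂U₁L₃`. -/
theorem double_coset_quotient_by_conjugation_equiv {G : Type*} [Group G]
    (L₁ U₁ L₂ L₃ U₂ U₃ : Subgroup G)
    (hN : U₁.Normal) (hInt : L₁ ⊓ U₁ = ⊥)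
    (hGen : (↑L₁ : Set G) * (↑U₁ : Set G) = Set.univ)
    (h₂ : L₂ ≤ L₁) (h₃ : L₃ ≤ L₁) (hU₂ : U₂ ≤ U₁) (hU₃ : U₃ ≤ U₁)
    (hN₂ : ∀ l ∈ L₂, ∀ u ∈ U₂, l * u * l⁻¹ ∈ U₂)
    (hN₃ : ∀ l ∈ L₃, ∀ u ∈ U₃, l * u * l⁻¹ ∈ U₃) :
    ∃ e : Quot (fun d d' : {d : Set G | ∃ u ∈ U₁, d = (↑U₂ : Set G) * {u} * ↑U₃} =>
            ∃ l ∈ L₂ ⊓ L₃, (d' : Set G) = (fun x => l * x * l⁻¹) '' (d : Set G)) ≃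
          {d : Set G | ∃ x ∈ ((↑L₂ : Set G) * (↑U₁ : Set G) * (↑L₃ : Set G)),
            d = ((↑L₂ : Set G) * (↑U₂ : Set G)) * {x} * ((↑L₃ : Set G) * (↑U₃ : Set G))},
      ∀ u (hu : u ∈ U₁),
        (e (Quot.mk _ ⟨(↑U₂ : Set G) * {u} * ↑U₃, ⟨u, hu, rfl⟩⟩) : Set G)
          = ((↑L₂ : Set G) * (↑U₂ : Set G)) * {u} * ((↑L₃ : Set G) * (↑U₃ : Set G)) :=
  double_coset_quotient_by_conjugation_equiv_general Subgroup.le_normalizer_of_normal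
    (fun _ hl _ hm h => hInt.le ⟨mul_mem (h₂ hl) (h₃ hm), h⟩) hU₂ hU₃
    (Subgroup.le_normalizer_iff.2 hN₂) (Subgroup.le_normalizer_iff.2 hN₃)
end

section
/- Let G be a group that is the internal semidirect product of a subgroup L₁ and a normal subgroup U₁ (so U₁ is normal in G, L₁ ∩ U₁ = {1}, and L₁U₁ = G). Let L₂, L₃ be subgroups of L₁ and U₂, U₃ subgroups of U₁ such that L₂ normalizes U₂ and L₃ normalizes U₃. If u, u' ∈ U₁ satisfy u' ∈ (L₂U₂) u (L₃U₃), then there exists l ∈ L₂ ∩ L₃ such that u' ∈ U₂ (l u l⁻¹) U₃. -/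
open Pointwise

/-!
Write `u' = (a x) u (b y)` with `a ∈ L₂`, `x ∈ U₂`, `b ∈ L₃`, `y ∈ U₃`. Modulo `U₁` this equation
reads `1 = a b`, so `a b` lies in both `L₁` and `U₁`, which forces `b = a⁻¹`. Hence `l = a` works:
`u' = (a x a⁻¹) (a u a⁻¹) y`.
-/

section

variable {G : Type*} [Group G]

theorem mul_mul_mul_mem_iff_of_mem_normalizer {H : Subgroup G} {a b x y : G}
    (ha : a ∈ Subgroup.normalizer (H : Set G)) (hx : x ∈ H) (hy : y ∈ H) :
    a * x * (b * y) ∈ H ↔ a * b ∈ H := by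
  have hconj : a * x * a⁻¹ ∈ H := (Subgroup.mem_normalizer_iff.1 ha x).1 hx
  have hfactor : a * x * (b * y) = a * x * a⁻¹ * (a * b) * y := by group
  rw [hfactor, H.mul_mem_cancel_right hy, H.mul_mem_cancel_left hconj]

theorem mul_mul_inv_mul_mem_mul_conj_mul {S T : Set G} {a x y : G}
    (ha : a ∈ Subgroup.normalizer S) (hx : x ∈ S) (hy : y ∈ T) (u : G) :
    a * x * u * (a⁻¹ * y) ∈ S * {a * u * a⁻¹} * T := by
  have hconj : a * x * a⁻¹ ∈ S := (Subgroup.mem_set_normalizer_iff.1 ha x).1 hx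
  have hfactor : a * x * u * (a⁻¹ * y) = a * x * a⁻¹ * (a * u * a⁻¹) * y := by group
  rw [hfactor]
  exact Set.mul_mem_mul (Set.mul_mem_mul hconj (Set.mem_singleton _)) hy

theorem mem_conjugated_double_coset_general {U₁ L₂ L₃ : Subgroup G} {U₂ U₃ : Set G}
    (hdisj : Disjoint (L₂ ⊔ L₃) U₁) (hN₁ : L₂ ≤ Subgroup.normalizer (U₁ : Set G))
    (hU₂ : U₂ ⊆ U₁) (hU₃ : U₃ ⊆ U₁) (hN₂ : L₂ ⊓ L₃ ≤ Subgroup.normalizer U₂)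
    {u u' : G} (hu : u ∈ U₁) (hu' : u' ∈ U₁)
    (h : u' ∈ ((L₂ : Set G) * U₂) * {u} * ((L₃ : Set G) * U₃)) :
    ∃ l ∈ L₂ ⊓ L₃, u' ∈ U₂ * {l * u * l⁻¹} * U₃ := by
  obtain ⟨_, ⟨_, ⟨a, ha, x, hx, rfl⟩, _, rfl, rfl⟩, _, ⟨b, hb, y, hy, rfl⟩, rfl⟩ := h
  have hab_mem : a * b ∈ U₁ := by
    rw [← mul_mul_mul_mem_iff_of_mem_normalizer (hN₁ ha) (mul_mem (hU₂ hx) hu) (hU₃ hy)]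
    simpa only [mul_assoc] using hu'
  have hab : a * b = 1 := Subgroup.disjoint_def.1 hdisj (Subgroup.mul_mem_sup ha hb) hab_mem
  obtain rfl : b = a⁻¹ := eq_inv_of_mul_eq_one_right hab
  have hl : a ∈ L₂ ⊓ L₃ := ⟨ha, L₃.inv_mem_iff.1 hb⟩
  exact ⟨a, hl, mul_mul_inv_mul_mem_mul_conj_mul (hN₂ hl) hx hy _⟩

end

/-- Let `G` be the internal semidirect product of a subgroup `L₁` and a
normal subgroup `U₁`.  Let `L₂, L₃ ≤ L₁` and `U₂, U₃ ≤ U₁` be subgroups with `L₂`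
normalizing `U₂` and `L₃` normalizing `U₃`.  If `u, u' ∈ U₁` satisfy
`u' ∈ (L₂U₂) u (L₃U₃)`, then there is `l ∈ L₂ ∩ L₃` with `u' ∈ U₂ (l u l⁻¹) U₃`. -/
theorem mem_conjugated_double_coset {G : Type*} [Group G]
    (L₁ U₁ L₂ L₃ U₂ U₃ : Subgroup G)
    (hN : U₁.Normal) (hInt : L₁ ⊓ U₁ = ⊥)
    (hGen : (↑L₁ : Set G) * (↑U₁ : Set G) = Set.univ)
    (h₂ : L₂ ≤ L₁) (h₃ : L₃ ≤ L₁) (hU₂ : U₂ ≤ U₁) (hU₃ : U₃ ≤ U₁)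
    (hN₂ : ∀ l ∈ L₂, ∀ u ∈ U₂, l * u * l⁻¹ ∈ U₂)
    (hN₃ : ∀ l ∈ L₃, ∀ u ∈ U₃, l * u * l⁻¹ ∈ U₃)
    (u u' : G) (hu : u ∈ U₁) (hu' : u' ∈ U₁)
    (h : u' ∈ ((↑L₂ : Set G) * (↑U₂ : Set G)) * {u} * ((↑L₃ : Set G) * (↑U₃ : Set G))) :
    ∃ l ∈ L₂ ⊓ L₃, u' ∈ (↑U₂ : Set G) * {l * u * l⁻¹} * ↑U₃ := by
  have hdisj : Disjoint (L₂ ⊔ L₃) U₁ := (disjoint_iff.2 hInt).mono_left (sup_le h₂ h₃)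
  exact mem_conjugated_double_coset_general hdisj Subgroup.le_normalizer_of_normal hU₂ hU₃
    (inf_le_left.trans (Subgroup.le_normalizer_iff.2 hN₂)) hu hu' h
end

section
/- Let P' be a group that is the internal semidirect product of a subgroup L' and a normal subgroup U' (so U' is normal in P', L' ∩ U' = {1}, and L'U' = P'). Let L'_K be a subgroup of L' and U'_K a subgroup of U' such that L'_K normalizes U'_K, and set Q = L'_K U'_K (a subgroup of P'). Let R be a subgroup of P' satisfying R = (R ∩ L')(R ∩ U'). Then the map sending the double coset R a Q to the double coset (R ∩ L') b L'_K, where a = b u is the unique decomposition with b ∈ L' and u ∈ U', is a well-defined map from R\P'/Q to (R ∩ L')\L'/L'_K; that is, if a, a' ∈ P' satisfy R a Q = R a' Q and have decompositions a = b u, a' = b' u' with b, b' ∈ L' and u, u' ∈ U', then (R ∩ L') b L'_K = (R ∩ L') b' L'_K. -/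
open Pointwise

/-!
The quotient map `P' → P' ⧸ U'` kills `U'` and is injective on `L'`. In the image of `R a Q` the
factors `R ∩ U'`, `u` and `U'_K` disappear, leaving the image of `(R ∩ L') b L'_K`; as the latter
set is contained in `L'`, it is determined by its image.
-/

section MulOneClass

variable {M N : Type*} [MulOneClass M] [MulOneClass N] (f : M →* N)

theorem image_mul_eq_image_of_subset_mker {S T : Set M} (hT : T ⊆ MonoidHom.mker f)
    (hT' : T.Nonempty) : f '' (S * T) = f '' S := by
  have himage : f '' T = 1 :=
    (hT'.image f).subset_one_iff.1 (Set.image_subset_iff.2 hT)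
  rw [Set.image_mul, himage, mul_one]

theorem image_mul_mul_eq_image_of_subset_mker {A V B W C X : Set M}
    (hV : V ⊆ MonoidHom.mker f) (hW : W ⊆ MonoidHom.mker f) (hX : X ⊆ MonoidHom.mker f)
    (hV' : V.Nonempty) (hW' : W.Nonempty) (hX' : X.Nonempty) :
    f '' (A * V * (B * W) * (C * X)) = f '' (A * B * C) := by
  rw [Set.image_mul, Set.image_mul, image_mul_eq_image_of_subset_mker f hV hV',
    image_mul_eq_image_of_subset_mker f hW hW', image_mul_eq_image_of_subset_mker f hX hX',
    ← Set.image_mul, ← Set.image_mul]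

end MulOneClass

theorem injOn_iff_disjoint_ker {G H : Type*} [Group G] [MulOneClass H] (f : G →* H)
    (L : Subgroup G) : Set.InjOn f L ↔ Disjoint L f.ker := by
  rw [disjoint_comm, ← Subgroup.subgroupOf_eq_bot, ← MonoidHom.ker_domRestrict,
    MonoidHom.ker_eq_bot_iff]
  exact Set.injOn_iff_injective

theorem levi_projection_well_defined_general {P' : Type*} [Group P'] {L' U' : Subgroup P'}
    [U'.Normal] (hdisj : Disjoint L' U') {RL LK RU UK : Set P'}
    (hRL : RL ⊆ L') (hLK : LK ⊆ L') (hRU : RU ⊆ U') (hUK : UK ⊆ U')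
    (hRU' : RU.Nonempty) (hUK' : UK.Nonempty) {b b' u u' : P'}
    (hb : b ∈ L') (hb' : b' ∈ L') (hu : u ∈ U') (hu' : u' ∈ U')
    (h : RL * RU * {b * u} * (LK * UK) = RL * RU * {b' * u'} * (LK * UK)) :
    RL * {b} * LK = RL * {b'} * LK := by
  let π := QuotientGroup.mk' U'
  have hinj : Set.InjOn π L' := by
    rwa [injOn_iff_disjoint_ker, QuotientGroup.ker_mk']
  have hmker {S : Set P'} (hS : S ⊆ U') : S ⊆ MonoidHom.mker π :=
    fun s hs ↦ (QuotientGroup.eq_one_iff s).2 (hS hs)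
  have hsub {c : P'} (hc : c ∈ L') : RL * {c} * LK ⊆ L' :=
    Submonoid.mul_subset (S := L'.toSubmonoid)
      (Submonoid.mul_subset hRL (Set.singleton_subset_iff.2 hc)) hLK
  have himage (c : P') {v : P'} (hv : v ∈ U') :
      π '' (RL * RU * {c * v} * (LK * UK)) = π '' (RL * {c} * LK) := by
    rw [← Set.singleton_mul_singleton]
    exact image_mul_mul_eq_image_of_subset_mker π (hmker hRU)
      (hmker (Set.singleton_subset_iff.2 hv)) (hmker hUK) hRU' (Set.singleton_nonempty v) hUK'
  refine (hinj.image_eq_image_iff (hsub hb) (hsub hb')).1 ?_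
  rw [← himage b hu, ← himage b' hu', h]

/-- Let `P'` be the internal semidirect product of a subgroup `L'` and
a normal subgroup `U'`.  Let `L'_K ≤ L'` and `U'_K ≤ U'` be subgroups such that `L'_K`
normalizes `U'_K`, and set `Q = L'_K U'_K`.  Let `R ≤ P'` satisfy
`R = (R ∩ L')(R ∩ U')`.  Then the map sending the double coset `R a Q` to
`(R ∩ L') b L'_K`, where `a = b u` with `b ∈ L'` and `u ∈ U'`, is well defined:
if `R a Q = R a' Q` and `a = b u`, `a' = b' u'` with `b, b' ∈ L'`, `u, u' ∈ U'`, then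
`(R ∩ L') b L'_K = (R ∩ L') b' L'_K`. -/
theorem levi_projection_well_defined {P' : Type*} [Group P']
    (L' U' L'K U'K R : Subgroup P')
    (hN : U'.Normal) (hInt : L' ⊓ U' = ⊥)
    (hGen : (↑L' : Set P') * (↑U' : Set P') = Set.univ)
    (hLK : L'K ≤ L') (hUK : U'K ≤ U')
    (hNorm : ∀ l ∈ L'K, ∀ u ∈ U'K, l * u * l⁻¹ ∈ U'K)
    (hR : (↑R : Set P') = (↑(R ⊓ L') : Set P') * (↑(R ⊓ U') : Set P'))
    (a a' b b' u u' : P')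
    (hb : b ∈ L') (hb' : b' ∈ L') (hu : u ∈ U') (hu' : u' ∈ U')
    (ha : a = b * u) (ha' : a' = b' * u')
    (h : (↑R : Set P') * {a} * ((↑L'K : Set P') * (↑U'K : Set P'))
         = (↑R : Set P') * {a'} * ((↑L'K : Set P') * (↑U'K : Set P'))) :
    (↑(R ⊓ L') : Set P') * {b} * ↑L'K = (↑(R ⊓ L') : Set P') * {b'} * ↑L'K := by
  rw [ha, ha', hR] at h
  exact levi_projection_well_defined_general (RU := ↑(R ⊓ U')) (disjoint_iff.2 hInt) inf_le_right
    hLK inf_le_right hUK (OneMemClass.coe_nonempty _) (OneMemClass.coe_nonempty _) hb hb' hu hu' h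
end

section
/- Let G be a group, K and P subgroups of G, and P' a subgroup of G that is the internal semidirect product of a subgroup L' and a normal subgroup U' of P'. Set L'_K = L' ∩ K, U'_K = U' ∩ K, and Q = P' ∩ K. Assume: (i) Q = L'_K U'_K, i.e. every element of Q is a product of an element of L'_K and an element of U'_K; and (ii) for every g ∈ G, g⁻¹Pg ∩ P' = (g⁻¹Pg ∩ L')(g⁻¹Pg ∩ U'). Let W ⊆ G be a set of representatives for the double cosets P\G/P', and for each w ∈ W let V(w) ⊆ L' be a set of representatives for the double cosets ((w⁻¹Pw) ∩ L')\L'/L'_K. Then for each w ∈ W and v ∈ V(w), the subgroup (wv)⁻¹P(wv) ∩ L'_K acts by conjugation on the double coset space ((wv)⁻¹P(wv) ∩ U')\U'/U'_K, and there is a bijection between the set of K-orbits on (G/P) × (K/Q) under the diagonal K-action and the disjoint union, over all w ∈ W and v ∈ V(w), of the orbit sets (((wv)⁻¹P(wv) ∩ U')\U'/U'_K) / ((wv)⁻¹P(wv) ∩ L'_K). -/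
open Pointwise

/-- The double coset space `((g⁻¹Pg) ∩ U')\U'/U'_K`, realized as the set of subsets of
`G` of the form `((g⁻¹Pg) ∩ U') u U'_K` with `u ∈ U'`.  Here `g⁻¹Pg = {x | gxg⁻¹ ∈ P}`. -/
def unipotentDoubleCosets {G : Type*} [Group G] (P U' UK : Subgroup G) (g : G) :
    Set (Set G) :=
  {d | ∃ u ∈ U', d = ({x : G | g * x * g⁻¹ ∈ P} ∩ (↑U' : Set G)) * {u} * ↑UK}

/-- The conjugation relation on `((g⁻¹Pg) ∩ U')\U'/U'_K` induced by the subgroup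
`(g⁻¹Pg) ∩ L'_K`: two double cosets are related iff one is obtained from the other by
conjugation by an element `m ∈ (g⁻¹Pg) ∩ L'_K`. -/
def conjDosetRel {G : Type*} [Group G] (P U' UK LK : Subgroup G) (g : G) :
    ↥(unipotentDoubleCosets P U' UK g) → ↥(unipotentDoubleCosets P U' UK g) → Prop :=
  fun d d' => ∃ m ∈ ({x : G | g * x * g⁻¹ ∈ P} ∩ (↑LK : Set G)),
    (d' : Set G) = (fun x => m * x * m⁻¹) '' (d : Set G)

/-!
The map `(gP, kQ) ↦ P g⁻¹k Q` identifies `K`-orbits on `(G/P) × (K/Q)` with double cosets `P\G/Q`.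
Every such double coset is `PwvuQ` with `w ∈ W`, `v ∈ V w`, `u ∈ U'`. If `PwluQ = Pwl'u'Q` with
`l, l' ∈ L'`, then an element of `w⁻¹Pw ∩ P'` carries `lu` to `l'u'` up to `Q`. Splitting both it
and the element of `Q` along `P' = L'U'` and comparing components gives one equation in `L'`, which
says that `l` and `l'` represent the same double coset, and one in `U'`, which for `l = l' = v` says
that `u` and `u'` agree in `((wv)⁻¹P(wv) ∩ U')\U'/U'_K` up to conjugation by `(wv)⁻¹P(wv) ∩ L'_K`.
-/

/-- Surjections `f` and `g` with the same fibres identify their targets. -/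
noncomputable def equivOfEqIffEq {α β γ : Type*} {f : α → β} {g : α → γ}
    (hf : Function.Surjective f) (hg : Function.Surjective g)
    (h : ∀ x y, f x = f y ↔ g x = g y) : β ≃ γ :=
  (Setoid.quotientKerEquivOfSurjective f hf).symm.trans <|
    (Quotient.congrRight h).trans (Setoid.quotientKerEquivOfSurjective g hg)

section OrbitsAsDoubleCosets

variable {G : Type*} [Group G] {K : Subgroup G} (P : Subgroup G) (Q : Subgroup K)

/-- The `K`-orbit of `(x⁻¹P, Q)` in `(G/P) × (K/Q)`; the inverse makes it depend only on the
double coset `PxQ`. -/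
def orbitOfInv (x : G) : MulAction.orbitRel.Quotient K ((G ⧸ P) × (K ⧸ Q)) :=
  Quotient.mk _ (((x⁻¹ : G) : G ⧸ P), ((1 : K) : K ⧸ Q))

theorem orbitOfInv_eq_iff {x y : G} :
    orbitOfInv P Q x = orbitOfInv P Q y ↔
      DoubleCoset.mk P (Q.map K.subtype) x = DoubleCoset.mk P (Q.map K.subtype) y := by
  have smul_eq_iff (k : K) :
      k • (((y⁻¹ : G) : G ⧸ P), ((1 : K) : K ⧸ Q)) = (((x⁻¹ : G) : G ⧸ P), ((1 : K) : K ⧸ Q)) ↔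
        y * (k : G)⁻¹ * x⁻¹ ∈ P ∧ k ∈ Q := by
    change (((k * y⁻¹ : G) : G ⧸ P), ((k * 1 : K) : K ⧸ Q)) = _ ↔ _
    simp [QuotientGroup.eq]
  rw [orbitOfInv, orbitOfInv, Quotient.eq, MulAction.orbitRel_apply, MulAction.mem_orbit_iff,
    DoubleCoset.eq]
  simp only [smul_eq_iff]
  constructor
  · rintro ⟨k, hP, hQ⟩
    exact ⟨_, hP, k, ⟨k, hQ, rfl⟩, by group⟩
  · rintro ⟨p, hp, _, ⟨k, hk, rfl⟩, rfl⟩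
    exact ⟨k, by simpa [mul_assoc] using hp, hk⟩

theorem orbitOfInv_surjective : Function.Surjective (orbitOfInv P Q) := by
  rintro ⟨⟨a⟩, ⟨k⟩⟩
  refine ⟨a⁻¹ * k, Quotient.sound ⟨k⁻¹, Prod.ext ?_ ?_⟩⟩
  · change (((k : G)⁻¹ * a : G) : G ⧸ P) = (((a⁻¹ * k)⁻¹ : G) : G ⧸ P)
    rw [mul_inv_rev, inv_inv]
  · change ((k⁻¹ * k : K) : K ⧸ Q) = ((1 : K) : K ⧸ Q)
    rw [inv_mul_cancel]

/-- `K\((G/P) × (K/Q)) ≃ P\G/Q`, sending the orbit of `(x⁻¹P, Q)` to `PxQ`. -/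
noncomputable def orbitRelQuotientEquivDoubleCoset :
    MulAction.orbitRel.Quotient K ((G ⧸ P) × (K ⧸ Q)) ≃
      DoubleCoset.Quotient (P : Set G) (Q.map K.subtype) :=
  equivOfEqIffEq (orbitOfInv_surjective P Q) Quotient.mk_surjective
    fun _ _ => orbitOfInv_eq_iff P Q

end OrbitsAsDoubleCosets

section Decompositions

variable {G : Type*} [Group G]

/-- `P` is the internal semidirect product of its subgroup `L` and its normal subgroup `U`. The
inclusions `L ≤ P` and `U ≤ P` follow from `coe_mul`. -/
structure IsInternalSemidirect (P L U : Subgroup G) : Prop where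
  le_normalizer : P ≤ Subgroup.normalizer U
  disjoint : Disjoint L U
  coe_mul : (L : Set G) * U = P

namespace IsInternalSemidirect

variable {P L U : Subgroup G}

theorem mul_mem (h : IsInternalSemidirect P L U) {l u : G} (hl : l ∈ L) (hu : u ∈ U) :
    l * u ∈ P :=
  h.coe_mul.subset (Set.mul_mem_mul hl hu)

theorem left_le (h : IsInternalSemidirect P L U) : L ≤ P := fun l hl => by
  simpa using h.mul_mem hl U.one_mem

theorem right_le (h : IsInternalSemidirect P L U) : U ≤ P := fun u hu => by
  simpa using h.mul_mem L.one_mem hu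

theorem exists_mul_eq (h : IsInternalSemidirect P L U) {p : G} (hp : p ∈ P) :
    ∃ l ∈ L, ∃ u ∈ U, l * u = p :=
  h.coe_mul.superset hp

theorem conj_mem (h : IsInternalSemidirect P L U) {p u : G} (hp : p ∈ P) (hu : u ∈ U) :
    p * u * p⁻¹ ∈ U :=
  (Subgroup.mem_normalizer_iff.1 (h.le_normalizer hp) u).1 hu

theorem conj_mem' (h : IsInternalSemidirect P L U) {p u : G} (hp : p ∈ P) (hu : u ∈ U) :
    p⁻¹ * u * p ∈ U := by
  simpa using h.conj_mem (P.inv_mem hp) hu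

theorem eq_and_eq_of_mul_eq_mul (h : IsInternalSemidirect P L U) {l l' u u' : G}
    (hl : l ∈ L) (hl' : l' ∈ L) (hu : u ∈ U) (hu' : u' ∈ U) (heq : l * u = l' * u') :
    l = l' ∧ u = u' := by
  have := @Subgroup.mul_injective_of_disjoint _ _ _ _ h.disjoint
    (⟨l, hl⟩, ⟨u, hu⟩) (⟨l', hl'⟩, ⟨u', hu'⟩) heq
  simpa using this

theorem le_of_le (h : IsInternalSemidirect P L U) {P₁ L₁ U₁ : Subgroup G}
    (h₁ : IsInternalSemidirect P₁ L₁ U₁) (hL : L₁ ≤ L) (hU : U₁ ≤ U) : P₁ ≤ P := by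
  intro p hp
  obtain ⟨l, hl, u, hu, rfl⟩ := h₁.exists_mul_eq hp
  exact h.mul_mem (hL hl) (hU hu)

theorem inf (h : IsInternalSemidirect P L U) {K : Subgroup G}
    (hK : ((P ⊓ K : Subgroup G) : Set G) = ↑(L ⊓ K) * ↑(U ⊓ K)) :
    IsInternalSemidirect (P ⊓ K) (L ⊓ K) (U ⊓ K) where
  le_normalizer := (inf_le_inf h.le_normalizer K.le_normalizer).trans
    Subgroup.inf_normalizer_le_normalizer_inf
  disjoint := h.disjoint.mono inf_le_left inf_le_left
  coe_mul := hK.symm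

end IsInternalSemidirect

/-- The subgroup `g⁻¹Pg`. -/
def conjSubgroup (P : Subgroup G) (g : G) : Subgroup G :=
  P.comap (MulAut.conj g).toMonoidHom

theorem mem_conjSubgroup {P : Subgroup G} {g x : G} :
    x ∈ conjSubgroup P g ↔ g * x * g⁻¹ ∈ P :=
  Iff.rfl

theorem mem_conjSubgroup_mul {P : Subgroup G} {g l x : G} :
    x ∈ conjSubgroup P (g * l) ↔ l * x * l⁻¹ ∈ conjSubgroup P g := by
  simp only [mem_conjSubgroup, mul_inv_rev, mul_assoc]

/-- `W` is a set of representatives for `A\X/B`, where `X ⊆ G` need not be a subgroup. -/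
structure IsDoubleCosetTransversal (A B : Subgroup G) (X W : Set G) : Prop where
  subset : W ⊆ X
  exists_mem : ∀ x ∈ X, ∃ w ∈ W, x ∈ DoubleCoset.doubleCoset w (A : Set G) B
  eq_of_mem : ∀ w ∈ W, ∀ w' ∈ W, w' ∈ DoubleCoset.doubleCoset w (A : Set G) B → w = w'

end Decompositions

section ConjugationAction

open DoubleCoset (doubleCoset mem_doubleCoset mem_doubleCoset_self doubleCoset_eq_of_mem)

variable {G : Type*} [Group G]

theorem image_conj_doubleCoset {A B : Subgroup G} {m : G} (hA : m ∈ Subgroup.normalizer A)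
    (hB : m ∈ Subgroup.normalizer B) (u : G) :
    (fun x => m * x * m⁻¹) '' doubleCoset u (A : Set G) B =
      doubleCoset (m * u * m⁻¹) (A : Set G) B := by
  change MulAut.conj m '' (A * {u} * B) = A * {MulAut.conj m u} * B
  rw [Set.image_mul, Set.image_mul, Set.image_singleton,
    Subgroup.mem_normalizer_iff_conj_image_eq.1 hA, Subgroup.mem_normalizer_iff_conj_image_eq.1 hB]

variable {P U U₁ L₁ : Subgroup G} {g : G}

theorem mem_normalizer_conjSubgroup_inf {m : G} (hm : m ∈ conjSubgroup P g)
    (hU : m ∈ Subgroup.normalizer U) :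
    m ∈ Subgroup.normalizer (conjSubgroup P g ⊓ U : Subgroup G) :=
  Subgroup.inf_normalizer_le_normalizer_inf ⟨Subgroup.le_normalizer hm, hU⟩

theorem conjDosetRel_equivalence (P U U₁ L₁ : Subgroup G) (g : G) :
    Equivalence (conjDosetRel P U U₁ L₁ g) where
  refl d := ⟨1, (conjSubgroup P g ⊓ L₁).one_mem, by simp⟩
  symm := by
    rintro d d' ⟨m, hm, h⟩
    refine ⟨m⁻¹, (conjSubgroup P g ⊓ L₁).inv_mem hm, ?_⟩
    simp [h, Set.image_image, mul_assoc]
  trans := by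
    rintro d d' d'' ⟨m, hm, h⟩ ⟨n, hn, h'⟩
    refine ⟨n * m, (conjSubgroup P g ⊓ L₁).mul_mem hn hm, ?_⟩
    simp [h, h', Set.image_image, mul_assoc]

/-- The point `((g⁻¹Pg) ∩ U)uU₁` of `unipotentDoubleCosets P U U₁ g`. -/
def unipotentDoubleCoset (P U₁ : Subgroup G) (g : G) (u : U) : unipotentDoubleCosets P U U₁ g :=
  ⟨doubleCoset u ((conjSubgroup P g ⊓ U : Subgroup G) : Set G) U₁, u, u.2, rfl⟩

/-- The class of `((g⁻¹Pg) ∩ U)uU₁` modulo conjugation by `(g⁻¹Pg) ∩ L₁`. -/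
def conjClass (P U₁ L₁ : Subgroup G) (g : G) (u : U) : Quot (conjDosetRel P U U₁ L₁ g) :=
  Quot.mk _ (unipotentDoubleCoset P U₁ g u)

theorem conjClass_surjective :
    Function.Surjective (conjClass P U₁ L₁ g : U → Quot (conjDosetRel P U U₁ L₁ g)) := by
  rintro ⟨_, u, hu, rfl⟩
  exact ⟨⟨u, hu⟩, rfl⟩

theorem conjClass_eq_iff (hU : L₁ ≤ Subgroup.normalizer U) (hU₁ : L₁ ≤ Subgroup.normalizer U₁)
    {u u' : U} :
    conjClass P U₁ L₁ g u = conjClass P U₁ L₁ g u' ↔ ∃ m ∈ conjSubgroup P g ⊓ L₁,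
      (u' : G) ∈ doubleCoset (m * u * m⁻¹) ((conjSubgroup P g ⊓ U : Subgroup G) : Set G) U₁ := by
  refine ((conjDosetRel_equivalence P U U₁ L₁ g).quot_mk_eq_iff _ _).trans
    (exists_congr fun m => and_congr_right fun hm => ?_)
  change doubleCoset _ _ _ = _ '' doubleCoset _ _ _ ↔ _
  rw [image_conj_doubleCoset (mem_normalizer_conjSubgroup_inf hm.1 (hU hm.2)) (hU₁ hm.2)]
  exact ⟨fun h => h ▸ mem_doubleCoset_self _ _ _, doubleCoset_eq_of_mem⟩

end ConjugationAction

section Parametrization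

open DoubleCoset (doubleCoset mem_doubleCoset)

variable {G : Type*} [Group G] {P P' L U Q L₁ U₁ : Subgroup G}

theorem doubleCosetMk_mul_eq_mul_iff {g x y : G} :
    DoubleCoset.mk P Q (g * x) = DoubleCoset.mk P Q (g * y) ↔
      ∃ r ∈ conjSubgroup P g, ∃ q ∈ Q, y = r * x * q := by
  rw [DoubleCoset.eq]
  constructor
  · rintro ⟨p, hp, q, hq, h⟩
    refine ⟨g⁻¹ * p * g, by simpa [mem_conjSubgroup, mul_assoc] using hp, q, hq, ?_⟩
    rw [← mul_right_inj g, h]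
    group
  · rintro ⟨r, hr, q, hq, rfl⟩
    exact ⟨g * r * g⁻¹, hr, q, hq, by group⟩

theorem mem_doubleCoset_of_doubleCosetMk_mul_eq (hQ : Q ≤ P') {w w' r r' : G} (hr : r ∈ P')
    (hr' : r' ∈ P') (h : DoubleCoset.mk P Q (w * r) = DoubleCoset.mk P Q (w' * r')) :
    w' ∈ doubleCoset w (P : Set G) P' := by
  obtain ⟨p, hp, q, hq, hpq⟩ := (DoubleCoset.eq P Q _ _).1 h
  refine mem_doubleCoset.2
    ⟨p, hp, r * q * r'⁻¹, P'.mul_mem (P'.mul_mem hr (hQ hq)) (P'.inv_mem hr'), ?_⟩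
  rw [eq_mul_inv_of_mul_eq hpq]
  group

theorem exists_eq_mul_of_doubleCosetMk_eq (h : IsInternalSemidirect P' L U)
    (hQ : IsInternalSemidirect Q L₁ U₁) (hL₁ : L₁ ≤ L) (hU₁ : U₁ ≤ U) {g : G}
    (hg : ((conjSubgroup P g ⊓ P' : Subgroup G) : Set G) =
      ↑(conjSubgroup P g ⊓ L) * ↑(conjSubgroup P g ⊓ U))
    {l l' u u' : G} (hl : l ∈ L) (hl' : l' ∈ L) (hu : u ∈ U) (hu' : u' ∈ U)
    (heq : DoubleCoset.mk P Q (g * l * u) = DoubleCoset.mk P Q (g * l' * u')) :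
    ∃ a ∈ conjSubgroup P g ⊓ L, ∃ b ∈ L₁, l' = a * l * b ∧
      u' ∈ doubleCoset (b⁻¹ * u * b) ((conjSubgroup P (g * l') ⊓ U : Subgroup G) : Set G) U₁ := by
  rw [mul_assoc, mul_assoc, doubleCosetMk_mul_eq_mul_iff] at heq
  obtain ⟨r, hr, q, hq, hrq⟩ := heq
  have hrP' : r ∈ P' := by
    rw [eq_mul_inv_of_mul_eq (hrq.trans (mul_assoc r _ _)).symm]
    exact P'.mul_mem (h.mul_mem hl' hu')
      (P'.inv_mem (P'.mul_mem (h.mul_mem hl hu) (h.le_of_le hQ hL₁ hU₁ hq)))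
  obtain ⟨a, ha, c, hc, rfl⟩ := hg.subset ⟨hr, hrP'⟩
  obtain ⟨b, hb, k, hk, rfl⟩ := hQ.exists_mul_eq hq
  have hb' : b ∈ P' := h.left_le (hL₁ hb)
  have hn : (l * b)⁻¹ * c * (l * b) ∈ U := h.conj_mem' (P'.mul_mem (h.left_le hl) hb') hc.2
  obtain ⟨rfl, rfl⟩ : l' = a * l * b ∧ u' = (l * b)⁻¹ * c * (l * b) * (b⁻¹ * u * b) * k :=
    h.eq_and_eq_of_mul_eq_mul hl' (L.mul_mem (L.mul_mem ha.2 hl) (hL₁ hb)) hu'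
      (U.mul_mem (U.mul_mem hn (h.conj_mem' hb' hu)) (hU₁ hk)) (by rw [hrq]; group)
  refine ⟨a, ha, b, hb, rfl, mem_doubleCoset.2 ⟨_, ⟨mem_conjSubgroup_mul.2 ?_, hn⟩, k, hk, rfl⟩⟩
  have hac : a * c * a⁻¹ ∈ conjSubgroup P g := Subgroup.mul_mem _ (mul_mem ha.1 hc.1)
    (Subgroup.inv_mem _ ha.1)
  simpa [mul_assoc] using hac

theorem doubleCosetMk_mul_eq_mul_of_mem_doubleCoset (hQ : IsInternalSemidirect Q L₁ U₁)
    {g m u u' : G}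
    (hm : m ∈ conjSubgroup P g ⊓ L₁)
    (hu' : u' ∈ doubleCoset (m * u * m⁻¹) ((conjSubgroup P g ⊓ U : Subgroup G) : Set G) U₁) :
    DoubleCoset.mk P Q (g * u) = DoubleCoset.mk P Q (g * u') := by
  obtain ⟨n, hn, k, hk, rfl⟩ := mem_doubleCoset.1 hu'
  exact doubleCosetMk_mul_eq_mul_iff.2 ⟨n * m, mul_mem hn.1 hm.1, m⁻¹ * k,
    hQ.mul_mem (L₁.inv_mem hm.2) hk, by simp only [mul_assoc]⟩

theorem doubleCosetMk_mul_eq_mul_iff_conjClass_eq (h : IsInternalSemidirect P' L U)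
    (hQ : IsInternalSemidirect Q L₁ U₁) (hL₁ : L₁ ≤ L) (hU₁ : U₁ ≤ U) {g : G}
    (hg : ((conjSubgroup P g ⊓ P' : Subgroup G) : Set G) =
      ↑(conjSubgroup P g ⊓ L) * ↑(conjSubgroup P g ⊓ U))
    {l : G} (hl : l ∈ L) {u u' : U} :
    DoubleCoset.mk P Q (g * l * u) = DoubleCoset.mk P Q (g * l * u') ↔
      conjClass P U₁ L₁ (g * l) u = conjClass P U₁ L₁ (g * l) u' := by
  rw [conjClass_eq_iff ((hL₁.trans h.left_le).trans h.le_normalizer)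
    (hQ.left_le.trans hQ.le_normalizer)]
  constructor
  · intro heq
    obtain ⟨a, ha, b, hb, hab, hu'⟩ :=
      exists_eq_mul_of_doubleCosetMk_eq h hQ hL₁ hU₁ hg hl hl u.2 u'.2 heq
    have conj_eq : l * b⁻¹ * l⁻¹ = a := by
      rw [mul_inv_eq_iff_eq_mul, mul_inv_eq_iff_eq_mul, ← hab]
    exact ⟨b⁻¹, ⟨mem_conjSubgroup_mul.2 (conj_eq ▸ ha.1), L₁.inv_mem hb⟩, by rwa [inv_inv]⟩
  · rintro ⟨m, hm, hu'⟩
    exact doubleCosetMk_mul_eq_mul_of_mem_doubleCoset hQ hm hu'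

theorem doubleCosetMk_eq_iff_sigma_conjClass_eq (h : IsInternalSemidirect P' L U)
    (hQ : IsInternalSemidirect Q L₁ U₁) (hL₁ : L₁ ≤ L) (hU₁ : U₁ ≤ U) {W : Set G} {V : G → Set G}
    (hW : IsDoubleCosetTransversal P P' Set.univ W)
    (hV : ∀ w ∈ W, IsDoubleCosetTransversal (conjSubgroup P w ⊓ L) L₁ L (V w))
    (hLevi : ∀ w ∈ W, ((conjSubgroup P w ⊓ P' : Subgroup G) : Set G) =
      ↑(conjSubgroup P w ⊓ L) * ↑(conjSubgroup P w ⊓ U))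
    {w w' : W} {v : V w} {v' : V w'} {u u' : U} :
    DoubleCoset.mk P Q (w * v * u) = DoubleCoset.mk P Q (w' * v' * u') ↔
      (⟨w, v, conjClass P U₁ L₁ _ u⟩ :
        Σ (w : W) (v : V (w : G)), Quot (conjDosetRel P U U₁ L₁ ((w : G) * (v : G)))) =
      ⟨w', v', conjClass P U₁ L₁ _ u'⟩ := by
  have hv : (v : G) ∈ L := (hV w w.2).subset v.2
  have hv' : (v' : G) ∈ L := (hV w' w'.2).subset v'.2
  constructor
  · intro heq
    obtain rfl : w = w' := Subtype.ext <| hW.eq_of_mem w w.2 w' w'.2 <|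
      mem_doubleCoset_of_doubleCosetMk_mul_eq (h.le_of_le hQ hL₁ hU₁) (h.mul_mem hv u.2)
        (h.mul_mem hv' u'.2) (by simpa only [mul_assoc] using heq)
    obtain ⟨a, ha, b, hb, hab, -⟩ :=
      exists_eq_mul_of_doubleCosetMk_eq h hQ hL₁ hU₁ (hLevi w w.2) hv hv' u.2 u'.2 heq
    obtain rfl : v = v' := Subtype.ext <|
      (hV w w.2).eq_of_mem v v.2 v' v'.2 (mem_doubleCoset.2 ⟨a, ha, b, hb, hab⟩)
    rw [(doubleCosetMk_mul_eq_mul_iff_conjClass_eq h hQ hL₁ hU₁ (hLevi w w.2) hv).1 heq]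
  · intro heq
    obtain ⟨rfl, heq⟩ := Sigma.mk.inj_iff.1 heq
    obtain ⟨rfl, heq⟩ := Sigma.mk.inj_iff.1 (eq_of_heq heq)
    exact (doubleCosetMk_mul_eq_mul_iff_conjClass_eq h hQ hL₁ hU₁ (hLevi w w.2) hv).2
      (eq_of_heq heq)

theorem exists_doubleCosetMk_mul_mul_eq (h : IsInternalSemidirect P' L U)
    (hL₁Q : L₁ ≤ Q) (hL₁ : L₁ ≤ L) {W : Set G} {V : G → Set G}
    (hW : IsDoubleCosetTransversal P P' Set.univ W)
    (hV : ∀ w ∈ W, IsDoubleCosetTransversal (conjSubgroup P w ⊓ L) L₁ L (V w)) (x : G) :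
    ∃ w ∈ W, ∃ v ∈ V w, ∃ u ∈ U, DoubleCoset.mk P Q (w * v * u) = DoubleCoset.mk P Q x := by
  obtain ⟨w, hw, hx⟩ := hW.exists_mem x trivial
  obtain ⟨p, hp, r, hr, rfl⟩ := mem_doubleCoset.1 hx
  obtain ⟨l, hl, u, hu, rfl⟩ := h.exists_mul_eq hr
  obtain ⟨v, hv, hlv⟩ := (hV w hw).exists_mem l hl
  obtain ⟨a, ha, b, hb, rfl⟩ := mem_doubleCoset.1 hlv
  refine ⟨w, hw, v, hv, b * u * b⁻¹, h.conj_mem (h.left_le (hL₁ hb)) hu, ?_⟩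
  exact (DoubleCoset.eq P Q _ _).2 ⟨p * (w * a * w⁻¹), P.mul_mem hp ha.1, b, hL₁Q hb, by group⟩

/-- `P\G/Q ≃ ∐ w v, (((wv)⁻¹P(wv) ∩ U)\U/U₁) / ((wv)⁻¹P(wv) ∩ L₁)`, sending `PwvuQ` to the class
of `u`. -/
noncomputable def doubleCosetQuotientEquivSigma (h : IsInternalSemidirect P' L U)
    (hQ : IsInternalSemidirect Q L₁ U₁) (hL₁ : L₁ ≤ L) (hU₁ : U₁ ≤ U) {W : Set G} {V : G → Set G}
    (hW : IsDoubleCosetTransversal P P' Set.univ W)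
    (hV : ∀ w ∈ W, IsDoubleCosetTransversal (conjSubgroup P w ⊓ L) L₁ L (V w))
    (hLevi : ∀ w ∈ W, ((conjSubgroup P w ⊓ P' : Subgroup G) : Set G) =
      ↑(conjSubgroup P w ⊓ L) * ↑(conjSubgroup P w ⊓ U)) :
    DoubleCoset.Quotient (P : Set G) Q ≃
      Σ (w : W) (v : V (w : G)), Quot (conjDosetRel P U U₁ L₁ ((w : G) * (v : G))) :=
  equivOfEqIffEq
    (f := fun x : Σ (w : W) (_ : V (w : G)), U => DoubleCoset.mk P Q (x.1 * x.2.1 * x.2.2))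
    (g := fun x => ⟨x.1, x.2.1, conjClass P U₁ L₁ _ x.2.2⟩)
    (by
      rintro ⟨x⟩
      obtain ⟨w, hw, v, hv, u, hu, hx⟩ := exists_doubleCosetMk_mul_mul_eq h hQ.left_le hL₁ hW hV x
      exact ⟨⟨⟨w, hw⟩, ⟨v, hv⟩, ⟨u, hu⟩⟩, hx⟩)
    (by
      rintro ⟨w, v, d⟩
      obtain ⟨u, rfl⟩ := conjClass_surjective d
      exact ⟨⟨w, v, u⟩, rfl⟩)
    fun _ _ => doubleCosetMk_eq_iff_sigma_conjClass_eq h hQ hL₁ hU₁ hW hV hLevi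

end Parametrization

theorem double_flag_orbit_parametrization_general {G : Type*} [Group G]
    (K P P' L' U' : Subgroup G)
    (hNormal : ∀ p ∈ P', ∀ u ∈ U', p * u * p⁻¹ ∈ U')
    (hInt : L' ⊓ U' = ⊥)
    (hGen : (↑L' : Set G) * (↑U' : Set G) = (↑P' : Set G))
    (hQ : (↑(P' ⊓ K) : Set G) = (↑(L' ⊓ K) : Set G) * (↑(U' ⊓ K) : Set G))
    (W : Set G)
    (hLevi : ∀ w ∈ W,
      ({x : G | w * x * w⁻¹ ∈ P} ∩ (↑P' : Set G))
        = ({x : G | w * x * w⁻¹ ∈ P} ∩ (↑L' : Set G)) *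
          ({x : G | w * x * w⁻¹ ∈ P} ∩ (↑U' : Set G)))
    (hW₁ : ∀ x : G, ∃ w ∈ W, x ∈ (↑P : Set G) * {w} * (↑P' : Set G))
    (hW₂ : ∀ w ∈ W, ∀ w' ∈ W, w' ∈ (↑P : Set G) * {w} * (↑P' : Set G) → w = w')
    (V : G → Set G)
    (hV₀ : ∀ w ∈ W, V w ⊆ (↑L' : Set G))
    (hV₁ : ∀ w ∈ W, ∀ l ∈ L', ∃ v ∈ V w,
      l ∈ ({x : G | w * x * w⁻¹ ∈ P} ∩ (↑L' : Set G)) * {v} * (↑(L' ⊓ K) : Set G))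
    (hV₂ : ∀ w ∈ W, ∀ v ∈ V w, ∀ v' ∈ V w,
      v' ∈ ({x : G | w * x * w⁻¹ ∈ P} ∩ (↑L' : Set G)) * {v} * (↑(L' ⊓ K) : Set G)
        → v = v') :
    (∀ w ∈ W, ∀ v ∈ V w,
      ∀ m ∈ ({x : G | (w * v) * x * (w * v)⁻¹ ∈ P} ∩ (↑(L' ⊓ K) : Set G)),
      ∀ u ∈ U',
        m * u * m⁻¹ ∈ U' ∧
        (fun x => m * x * m⁻¹) ''
            (({x : G | (w * v) * x * (w * v)⁻¹ ∈ P} ∩ (↑U' : Set G)) * {u} * ↑(U' ⊓ K))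
          = ({x : G | (w * v) * x * (w * v)⁻¹ ∈ P} ∩ (↑U' : Set G)) * {m * u * m⁻¹} *
              ↑(U' ⊓ K)) ∧
    Nonempty
      (Quotient (MulAction.orbitRel ↥K ((G ⧸ P) × (↥K ⧸ (P' ⊓ K).subgroupOf K))) ≃
        Σ (w : W) (v : V (w : G)),
          Quot (conjDosetRel P U' (U' ⊓ K) (L' ⊓ K) ((w : G) * (v : G)))) := by
  have hP' : IsInternalSemidirect P' L' U' :=
    ⟨Subgroup.le_normalizer_iff.2 hNormal, disjoint_iff.2 hInt, hGen⟩
  have hQ' : IsInternalSemidirect (P' ⊓ K) (L' ⊓ K) (U' ⊓ K) := hP'.inf hQ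
  have hW : IsDoubleCosetTransversal P P' Set.univ W :=
    ⟨W.subset_univ, fun x _ => hW₁ x, hW₂⟩
  have hV (w) (hw : w ∈ W) :
      IsDoubleCosetTransversal (conjSubgroup P w ⊓ L') (L' ⊓ K) L' (V w) :=
    ⟨hV₀ w hw, hV₁ w hw, hV₂ w hw⟩
  have hmap : ((P' ⊓ K).subgroupOf K).map K.subtype = P' ⊓ K := by simp
  refine ⟨fun w _ v _ m hm u hu => ?_, ?_⟩
  · have hmQ : m ∈ P' ⊓ K := hQ'.left_le hm.2
    exact ⟨hP'.conj_mem hmQ.1 hu, image_conj_doubleCoset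
      (mem_normalizer_conjSubgroup_inf hm.1 (hP'.le_normalizer hmQ.1)) (hQ'.le_normalizer hmQ) u⟩
  · have e := orbitRelQuotientEquivDoubleCoset P ((P' ⊓ K).subgroupOf K)
    rw [hmap] at e
    exact ⟨e.trans <| doubleCosetQuotientEquivSigma hP' hQ' inf_le_left inf_le_left hW hV hLevi⟩

/-- Parametrization of the `K`-orbits on the double flag variety
`(G/P) × (K/Q)`: with `P'` an internal semidirect product `L' ⋉ U'`,
`L'_K = L' ∩ K`, `U'_K = U' ∩ K`, `Q = P' ∩ K`, assuming `Q = L'_K U'_K` and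
`g⁻¹Pg ∩ P' = (g⁻¹Pg ∩ L')(g⁻¹Pg ∩ U')` for all `g`, and given systems of
representatives `W` for `P\G/P'` and `V w` for `((w⁻¹Pw) ∩ L')\L'/L'_K`, the subgroup
`(wv)⁻¹P(wv) ∩ L'_K` acts by conjugation on `((wv)⁻¹P(wv) ∩ U')\U'/U'_K`, and the
`K`-orbit space of `(G/P) × (K/Q)` is in bijection with the disjoint union over
`w ∈ W`, `v ∈ V w` of the corresponding quotients. -/
theorem double_flag_orbit_parametrization {G : Type*} [Group G]
    (K P P' L' U' : Subgroup G)
    (hL' : L' ≤ P') (hU' : U' ≤ P')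
    (hNormal : ∀ p ∈ P', ∀ u ∈ U', p * u * p⁻¹ ∈ U')
    (hInt : L' ⊓ U' = ⊥)
    (hGen : (↑L' : Set G) * (↑U' : Set G) = (↑P' : Set G))
    (hQ : (↑(P' ⊓ K) : Set G) = (↑(L' ⊓ K) : Set G) * (↑(U' ⊓ K) : Set G))
    (hLevi : ∀ g : G,
      ({x : G | g * x * g⁻¹ ∈ P} ∩ (↑P' : Set G))
        = ({x : G | g * x * g⁻¹ ∈ P} ∩ (↑L' : Set G)) *
          ({x : G | g * x * g⁻¹ ∈ P} ∩ (↑U' : Set G)))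
    (W : Set G)
    (hW₁ : ∀ x : G, ∃ w ∈ W, x ∈ (↑P : Set G) * {w} * (↑P' : Set G))
    (hW₂ : ∀ w ∈ W, ∀ w' ∈ W, w' ∈ (↑P : Set G) * {w} * (↑P' : Set G) → w = w')
    (V : G → Set G)
    (hV₀ : ∀ w ∈ W, V w ⊆ (↑L' : Set G))
    (hV₁ : ∀ w ∈ W, ∀ l ∈ L', ∃ v ∈ V w,
      l ∈ ({x : G | w * x * w⁻¹ ∈ P} ∩ (↑L' : Set G)) * {v} * (↑(L' ⊓ K) : Set G))
    (hV₂ : ∀ w ∈ W, ∀ v ∈ V w, ∀ v' ∈ V w,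
      v' ∈ ({x : G | w * x * w⁻¹ ∈ P} ∩ (↑L' : Set G)) * {v} * (↑(L' ⊓ K) : Set G)
        → v = v') :
    (∀ w ∈ W, ∀ v ∈ V w,
      ∀ m ∈ ({x : G | (w * v) * x * (w * v)⁻¹ ∈ P} ∩ (↑(L' ⊓ K) : Set G)),
      ∀ u ∈ U',
        m * u * m⁻¹ ∈ U' ∧
        (fun x => m * x * m⁻¹) ''
            (({x : G | (w * v) * x * (w * v)⁻¹ ∈ P} ∩ (↑U' : Set G)) * {u} * ↑(U' ⊓ K))
          = ({x : G | (w * v) * x * (w * v)⁻¹ ∈ P} ∩ (↑U' : Set G)) * {m * u * m⁻¹} *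
              ↑(U' ⊓ K)) ∧
    Nonempty
      (Quotient (MulAction.orbitRel ↥K ((G ⧸ P) × (↥K ⧸ (P' ⊓ K).subgroupOf K))) ≃
        Σ (w : W) (v : V (w : G)),
          Quot (conjDosetRel P U' (U' ⊓ K) (L' ⊓ K) ((w : G) * (v : G)))) := by
  exact double_flag_orbit_parametrization_general K P P' L' U' hNormal hInt hGen hQ W
    (fun w _ => hLevi w) hW₁ hW₂ V hV₀ hV₁ hV₂
end
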